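/- For all integers k >= 1, 0 <= l <= k-1 and r >= 0: \tilde{P}_{r,k,l} = \sum_{p=0}^{\lfloor r/2 \rfloor} ((l+1)/(kp+l+1)) * C((k+1)p+l, p) * C(r+2(k-1)p+2l, r-2p). -/

import Mathlib

open Finset

inductive Step : Type
  | u | d | h
deriving DecidableEq

/-- Lengths of maximal blocks of letters with `wt s ≠ none`, weighted by `wt`. -/
def runs (wt : Step → Option ℕ) : List Step → List ℕ
  | [] => []
  | s :: l =>
    match wt s, runs wt l with
    | none, r => r
    | some n, r =>
      match l with
      | [] => [n]
      | s' :: _ =>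
        match wt s' with
        | none => n :: r
        | some _ =>
          match r with
          | a :: rest => (n + a) :: rest
          | [] => [n]

def uRuns : List Step → List ℕ :=
  runs (fun s => match s with | Step.u => some 1 | _ => none)

def uhRuns (k : ℕ) : List Step → List ℕ :=
  runs (fun s => match s with | Step.u => some 1 | Step.h => some k | Step.d => none)

def alpha (i : ℕ) (w : List Step) : ℕ := (uRuns w).count i

def beta (i : ℕ) (w : List Step) : ℕ := (uRuns w).tail.count i

def IsNonneg (w : List Step) : Prop :=
  ∀ i : ℕ, (w.take i).count Step.d ≤ (w.take i).count Step.u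

def pathSet (m j : ℕ) : Set (List Step) :=
  {w | w.count Step.u = m ∧ w.count Step.d = m ∧ w.count Step.h = j ∧ IsNonneg w}

/-- no horizontal step lies on the x-axis -/
def NoLowH (w : List Step) : Prop :=
  ∀ (i : ℕ) (hi : i < w.length), w[i]'hi = Step.h →
    (w.take i).count Step.u ≠ (w.take i).count Step.d

def qSet (m j : ℕ) : Set (List Step) :=
  {w | w ∈ pathSet m j ∧ NoLowH w}

/-- normalized partial Bell polynomial (r!/m!) B_{m,r}(1!t₁,2!t₂,…) -/
def bellNorm (m r : ℕ) (t : ℕ → ℚ) : ℚ :=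
  ∑ f : Fin m → Fin (m + 1),
    if (∑ i : Fin m, (f i : ℕ)) = r ∧ (∑ i : Fin m, ((i : ℕ) + 1) * (f i : ℕ)) = m then
      (r.factorial : ℚ) / (∏ i : Fin m, ((f i : ℕ).factorial : ℚ)) * ∏ i : Fin m, t ((i : ℕ) + 1) ^ (f i : ℕ)
    else 0

/-- normalized potential polynomial  P_p^{(lam)}(1!t₁,2!t₂,…)/p! -/
def potential (lam p : ℕ) (t : ℕ → ℚ) : ℚ :=
  ∑ r ∈ Finset.range (p + 1), (Nat.choose lam r : ℚ) * bellNorm p r t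


/-- the number of k-paths of length k*r + 2*l in which every internal (u,h)-segment has
length divisible by k and the leftmost (u,h)-segment (if any) has length ≡ l (mod k);
a path with no (u,h)-segment qualifies exactly when l = 0. -/
noncomputable def tildeP (k l r : ℕ) : ℕ :=
  Set.ncard {w : List Step | IsNonneg w ∧ w.count Step.u = w.count Step.d ∧
    2 * w.count Step.u + k * w.count Step.h = k * r + 2 * l ∧
    (uhRuns k w = [] → l = 0) ∧
    (∀ a ∈ (uhRuns k w).head?, a % k = l % k) ∧
    (∀ a ∈ (uhRuns k w).tail, a % k = 0)}


/-- next residue after an up-step -/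
def nxt (k t : ℕ) : ℕ := if t = 0 then k - 1 else t - 1

/-- run condition, recursively -/
def rc (k : ℕ) : ℕ → List Step → Prop
  | t, [] => t = 0
  | t, Step.u :: w => rc k (nxt k t) w
  | t, Step.d :: w => t = 0 ∧ rc k 0 w
  | t, Step.h :: w => rc k t w

def good (k : ℕ) : ℕ → ℕ → List Step → Prop
  | t, s, [] => t = 0 ∧ s = 0
  | t, s, Step.u :: w => good k (nxt k t) (s + 1) w
  | t, s, Step.d :: w => t = 0 ∧ 1 ≤ s ∧ good k 0 (s - 1) w
  | t, s, Step.h :: w => good k t s w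

lemma uhRuns_nil (k : ℕ) : uhRuns k [] = [] := by simp [uhRuns, runs]

lemma uhRuns_d (k : ℕ) (w : List Step) : uhRuns k (Step.d :: w) = uhRuns k w := by
  simp [uhRuns, runs]

lemma uhRuns_sing (k : ℕ) (x : Step) (hx : x ≠ Step.d) :
    uhRuns k [x] = [if x = Step.u then 1 else k] := by
  cases x <;> simp_all [uhRuns, runs]

lemma uhRuns_xd (k : ℕ) (x : Step) (hx : x ≠ Step.d) (w : List Step) :
    uhRuns k (x :: Step.d :: w) = (if x = Step.u then 1 else k) :: uhRuns k w := by
  cases x <;> simp_all [uhRuns, runs]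

lemma uhRuns_xy (k : ℕ) (x y : Step) (hx : x ≠ Step.d) (hy : y ≠ Step.d) (w : List Step)
    (a : ℕ) (l : List ℕ) (h : uhRuns k (y :: w) = a :: l) :
    uhRuns k (x :: y :: w) = ((if x = Step.u then 1 else k) + a) :: l := by
  unfold uhRuns at *
  rw [runs, h]
  cases x <;> cases y <;> simp_all

lemma uhRuns_ne (k : ℕ) (w : List Step) : ∀ (y : Step), y ≠ Step.d →
    ∃ a l, uhRuns k (y :: w) = a :: l := by
  induction w with
  | nil => intro y hy; exact ⟨_, _, uhRuns_sing k y hy⟩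
  | cons z w ih =>
    intro y hy
    by_cases hz : z = Step.d
    · subst hz; exact ⟨_, _, uhRuns_xd k y hy w⟩
    · obtain ⟨a, l, h⟩ := ih z hz
      exact ⟨_, _, uhRuns_xy k y z hy hz w a l h⟩

lemma mod_nxt (k t a : ℕ) (ht : t < k) : (1 + a) % k = t ↔ a % k = nxt k t := by
  unfold nxt
  have hk : 0 < k := by omega
  have h1 : (1 + a) % k = (1 + a % k) % k := by simp
  have h2 : a % k < k := Nat.mod_lt _ hk
  rw [h1]
  generalize a % k = b at *
  by_cases hb : 1 + b < k
  · rw [Nat.mod_eq_of_lt hb]; split_ifs <;> omega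
  · have : 1 + b = k := by omega
    rw [this, Nat.mod_self]; split_ifs <;> omega

lemma nxt_lt (k t : ℕ) (ht : t < k) : nxt k t < k := by
  unfold nxt; split_ifs <;> omega

def RunCond (k t : ℕ) (w : List Step) : Prop :=
  (w.head?.getD Step.d = Step.d → t = 0) ∧
    (∀ a ∈ (uhRuns k w).head?, a % k = t) ∧ (∀ a ∈ (uhRuns k w).tail, a % k = 0)

lemma RunCond_zero (k : ℕ) (w : List Step) :
    RunCond k 0 w ↔ ∀ a ∈ uhRuns k w, a % k = 0 := by
  unfold RunCond
  cases uhRuns k w <;> simp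

lemma rc_iff (k : ℕ) (w : List Step) : ∀ t, t < k → (rc k t w ↔ RunCond k t w) := by
  induction w with
  | nil => intro t ht; simp [rc, RunCond, uhRuns_nil]
  | cons x w ih =>
    intro t ht
    have hk : 0 < k := by omega
    have key : ∀ x : Step, x ≠ Step.d → ∀ t' < k,
        (∀ a, ((if x = Step.u then 1 else k) + a) % k = t ↔ a % k = t') →
        (RunCond k t' w ↔ RunCond k t (x :: w)) := by
      intro x hx t' ht' ha
      rcases w with _ | ⟨y, w⟩
      · have h0 := ha 0
        simp only [add_zero, Nat.zero_mod] at h0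
        simp only [RunCond, uhRuns_nil, uhRuns_sing k x hx]
        simp only [List.head?_nil, Option.getD_none, List.head?_cons, Option.getD_some, hx, List.tail_cons, Option.mem_def,
            Option.some.injEq, forall_eq', h0]
        simp [eq_comm]
      · by_cases hy : y = Step.d
        · subst hy
          have h0 := ha 0
          simp only [add_zero, Nat.zero_mod] at h0
          simp only [RunCond, uhRuns_d, uhRuns_xd k x hx]
          simp only [List.head?_cons, Option.getD_some, hx, List.tail_cons, Option.mem_def,
            Option.some.injEq, forall_eq', h0]
          constructor
          · rintro ⟨h1, h2, h3⟩
            have h1 := h1 trivial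
            subst h1
            refine ⟨by simp, rfl, ?_⟩
            cases h : uhRuns k w <;> simp_all
          · rintro ⟨-, h2, h3⟩
            subst h2
            cases h : uhRuns k w <;> simp_all
        · obtain ⟨a, l, h⟩ := uhRuns_ne k w y hy
          simp only [RunCond, h, uhRuns_xy k x y hx hy w a l h]
          simp [hx, hy, ha]
    cases x with
    | u =>
      rw [rc, ih _ (nxt_lt k t ht)]
      exact key Step.u (by simp) _ (nxt_lt k t ht) (fun a => by simpa using mod_nxt k t a ht)
    | h =>
      rw [rc, ih _ ht]
      exact key Step.h (by simp) _ ht (fun a => by simp)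
    | d =>
      rw [rc, ih _ hk, RunCond_zero]
      unfold RunCond
      rw [uhRuns_d]
      constructor
      · rintro ⟨rfl, h⟩
        exact ⟨by simp, fun a ha => h a (List.mem_of_mem_head? ha),
          fun a ha => h a (List.mem_of_mem_tail ha)⟩
      · rintro ⟨h1, h2, h3⟩
        have h1 := h1 (by simp)
        subst h1
        refine ⟨rfl, ?_⟩
        cases h : uhRuns k w <;> simp_all

def nn (s : ℕ) (w : List Step) : Prop :=
  ∀ i : ℕ, (w.take i).count Step.d ≤ (w.take i).count Step.u + s

lemma nn_nil (s : ℕ) : nn s [] := by intro i; simp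
lemma nn_u (s : ℕ) (w : List Step) : nn s (Step.u :: w) ↔ nn (s + 1) w := by
  constructor
  · intro h i
    have := h (i + 1)
    simp at this; omega
  · intro h i
    rcases i with _ | i
    · simp
    · have := h i
      simp; omega
lemma nn_h (s : ℕ) (w : List Step) : nn s (Step.h :: w) ↔ nn s w := by
  constructor
  · intro h i
    have := h (i + 1)
    simp at this; omega
  · intro h i
    rcases i with _ | i
    · simp
    · have := h i
      simp; omega
lemma nn_d (s : ℕ) (w : List Step) : nn s (Step.d :: w) ↔ 1 ≤ s ∧ nn (s - 1) w := by
  constructor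
  · intro h
    have h1 := h 1
    simp at h1
    refine ⟨h1, fun i => ?_⟩
    have := h (i + 1)
    simp at this; omega
  · rintro ⟨h1, h⟩ i
    rcases i with _ | i
    · simp
    · have := h i
      simp; omega

lemma good_iff (k : ℕ) (w : List Step) : ∀ t s, (good k t s w ↔
    rc k t w ∧ nn s w ∧ w.count Step.d = w.count Step.u + s) := by
  induction w with
  | nil => intro t s; simp [good, rc, nn_nil, eq_comm]
  | cons x w ih =>
    intro t s
    cases x with
    | u =>
      rw [good, rc, nn_u, ih]; simp
      intros; omega
    | h => rw [good, rc, nn_h, ih]; simp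
    | d =>
      rw [good, rc, nn_d, ih]; simp
      constructor
      · rintro ⟨a, b, c, d, e⟩; exact ⟨⟨a, c⟩, ⟨b, d⟩, by omega⟩
      · rintro ⟨⟨a, c⟩, ⟨b, d⟩, e⟩; exact ⟨a, b, c, d, by omega⟩

lemma good_count (k : ℕ) (hk : 1 ≤ k) (w : List Step) : ∀ t s, good k t s w →
    ∃ p, w.count Step.u = k * p + t := by
  induction w with
  | nil => intro t s h; exact ⟨0, by simp [h.1]⟩
  | cons x w ih =>
    intro t s h
    cases x with
    | u =>
      obtain ⟨p, hp⟩ := ih _ _ h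
      unfold nxt at hp
      split_ifs at hp with h0
      · refine ⟨p + 1, ?_⟩
        simp [hp, h0, mul_add]; omega
      · refine ⟨p, ?_⟩
        simp [hp]; omega
    | h =>
      obtain ⟨p, hp⟩ := ih _ _ h
      exact ⟨p, by simpa using hp⟩
    | d =>
      obtain ⟨h0, -, h⟩ := h
      obtain ⟨p, hp⟩ := ih _ _ h
      exact ⟨p, by simp [hp, h0]⟩

lemma length_count (w : List Step) :
    w.length = w.count Step.u + w.count Step.d + w.count Step.h := by
  induction w with
  | nil => rfl
  | cons x w ih => cases x <;> simp [ih] <;> omega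

def T (k : ℕ) : ℕ → ℕ → ℕ → ℕ → Finset (List Step)
  | 0, t, s, j => if t = 0 ∧ s = 0 ∧ j = 0 then {[]} else ∅
  | n + 1, t, s, j =>
    ((T k n (nxt k t) (s + 1) j).image (List.cons Step.u)) ∪
    ((if t = 0 ∧ 1 ≤ s then (T k n 0 (s - 1) j).image (List.cons Step.d) else ∅) ∪
    (if 1 ≤ j then (T k n t s (j - 1)).image (List.cons Step.h) else ∅))

lemma mem_T (k n : ℕ) : ∀ t s j (w : List Step), w ∈ T k n t s j ↔
    w.length = n ∧ good k t s w ∧ w.count Step.h = j := by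
  induction n with
  | zero =>
    intro t s j w
    rw [T]
    split_ifs with h
    · obtain ⟨rfl, rfl, rfl⟩ := h
      simp
      rintro rfl; simp [good]
    · simp
      rintro rfl; simp [good]; grind
  | succ n ih =>
    intro t s j w
    rw [T]
    simp only [mem_union, mem_image, ih]
    rcases w with _ | ⟨x, w⟩
    · split_ifs <;> simp
    · cases x
      · split_ifs <;> simp [good, ih]
      · split_ifs with h1 h2 h2
        · simp [good, ih, h1]
        · simp [good, ih, h1]
        · simp [good]; grind
        · simp [good]; grind
      · split_ifs <;> simp [good, ih] <;> grind

lemma card_T_succ (k n t s j : ℕ) : (T k (n + 1) t s j).card =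
    (T k n (nxt k t) (s + 1) j).card + ((if t = 0 ∧ 1 ≤ s then (T k n 0 (s - 1) j).card else 0)
     + (if 1 ≤ j then (T k n t s (j - 1)).card else 0)) := by
  have inj : ∀ x : Step, Function.Injective (List.cons x) := fun x => List.cons_injective
  rw [T, card_union_of_disjoint, card_union_of_disjoint, card_image_of_injective _ (inj _)]
  · congr 2
    · split_ifs
      · rw [card_image_of_injective _ (inj _)]
      · rfl
    · split_ifs
      · rw [card_image_of_injective _ (inj _)]
      · rfl
  · rw [Finset.disjoint_left]
    intro a; split_ifs <;> simp <;> grind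
  · rw [Finset.disjoint_left]
    intro a; split_ifs <;> simp <;> grind

lemma T_empty (k n t s j : ℕ) (hk : 1 ≤ k) (h : n < 2 * t + s + j) : T k n t s j = ∅ := by
  rw [Finset.eq_empty_iff_forall_notMem]
  intro w hw
  rw [mem_T] at hw
  obtain ⟨h1, h2, h3⟩ := hw
  obtain ⟨p, hp⟩ := good_count k hk w t s h2
  have h4 := ((good_iff k w t s).1 h2).2.2
  have := length_count w
  have : 0 ≤ k * p := Nat.zero_le _
  omega

def F (k p s : ℕ) : ℚ := ((s : ℚ) + 1) / (k * p + s + 1) * Nat.choose ((k + 1) * p + s) p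

lemma F_zero (k s : ℕ) : F k 0 s = 1 := by
  have : (s : ℚ) + 1 ≠ 0 := by positivity
  simp [F, this]

lemma F_succ_zero (k p : ℕ) : F k (p + 1) 0 = F k p k := by
  have h := Nat.add_one_mul_choose_eq ((k + 1) * p + k) p
  have e : (k + 1) * (p + 1) + 0 = (k + 1) * p + k + 1 := by ring
  unfold F
  rw [e]
  have h' : (((k + 1) * p + k + 1 : ℕ) : ℚ) * (Nat.choose ((k + 1) * p + k) p : ℚ) =
    (Nat.choose ((k + 1) * p + k + 1) (p + 1) : ℚ) * ((p : ℚ) + 1) := by exact_mod_cast h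
  push_cast at h' ⊢
  have h1 : (p : ℚ) + 1 ≠ 0 := by positivity
  have h2 : (k : ℚ) * (p + 1) + 0 + 1 ≠ 0 := by positivity
  have h3 : (k : ℚ) * p + k + 1 ≠ 0 := by positivity
  have h4 : (Nat.choose ((k + 1) * p + k + 1) (p + 1) : ℚ) =
    (k + 1) * (Nat.choose ((k + 1) * p + k) p : ℚ) := by
    apply mul_right_cancel₀ h1
    rw [← h']; ring
  rw [h4]
  field_simp
  ring

lemma F_succ_succ (k p s : ℕ) : F k (p + 1) (s + 1) = F k p (s + 1 + k) + F k (p + 1) s := by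
  obtain ⟨n, hn⟩ : ∃ n, n = (k + 1) * p + k + s + 1 := ⟨_, rfl⟩
  have e1 : (k + 1) * (p + 1) + (s + 1) = n + 1 := by rw [hn]; ring
  have e2 : (k + 1) * p + (s + 1 + k) = n := by rw [hn]; ring
  have e3 : (k + 1) * (p + 1) + s = n := by rw [hn]; ring
  unfold F
  rw [e1, e2, e3, Nat.choose_succ_succ]
  have h := Nat.choose_succ_right_eq n p
  have e4 : n - p = k * p + k + s + 1 := by
    rw [hn]
    have : (k + 1) * p = k * p + p := by ring
    omega
  rw [e4] at h
  have h' : (n.choose (p + 1) : ℚ) * (p + 1) = n.choose p * (k * p + k + s + 1) := by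
    exact_mod_cast h
  have h1 : (p : ℚ) + 1 ≠ 0 := by positivity
  have h4 : (n.choose (p + 1) : ℚ) = n.choose p * (k * p + k + s + 1) / (p + 1) := by
    field_simp; linarith
  push_cast
  rw [h4]
  have h2 : (k : ℚ) * (p + 1) + (s + 1) + 1 ≠ 0 := by positivity
  have h3 : (k : ℚ) * p + (s + 1 + k) + 1 ≠ 0 := by positivity
  have h5 : (k : ℚ) * (p + 1) + s + 1 ≠ 0 := by positivity
  field_simp
  ring

lemma card_T (k : ℕ) (hk : 1 ≤ k) (n : ℕ) : ∀ p t s j, n = 2 * (k * p + t) + s + j →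
    ((T k n t s j).card : ℚ) = n.choose j * F k p (s + t) := by
  induction n with
  | zero =>
    intro p t s j h
    have hp : k * p = 0 := by omega
    have hp : p = 0 := by rcases Nat.mul_eq_zero.1 hp with h | h <;> omega
    have ht : t = 0 := by omega
    have hs : s = 0 := by omega
    have hj : j = 0 := by omega
    subst hp ht hs hj
    simp [T, F_zero]
  | succ n ih =>
    intro p t s j h
    rw [card_T_succ]
    -- the two parts: h-steps and the other steps
    have hh : ((if 1 ≤ j then (T k n t s (j - 1)).card else 0 : ℕ) : ℚ) =
        (if 1 ≤ j then (n.choose (j - 1) : ℚ) else 0) * F k p (s + t) := by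
      split_ifs with hj
      · exact ih p t s (j - 1) (by omega)
      · simp
    have hud : (((T k n (nxt k t) (s + 1) j).card +
        (if t = 0 ∧ 1 ≤ s then (T k n 0 (s - 1) j).card else 0) : ℕ) : ℚ) =
        n.choose j * F k p (s + t) := by
      rcases Nat.eq_zero_or_pos t with ht | ht
      · subst ht
        have hd : 1 ≤ s → ((T k n 0 (s - 1) j).card : ℚ) = n.choose j * F k p (s - 1 + 0) :=
          fun hs => ih p 0 (s - 1) j (by omega)
        have hn : nxt k 0 = k - 1 := by simp [nxt]
        rw [hn]
        rcases p with _ | p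
        · rw [T_empty k n (k - 1) (s + 1) j hk (by simp at h; omega)]
          by_cases hs : 1 ≤ s
          · simp [hs, hd hs, F_zero]
          · have hs : s = 0 := by omega
            subst hs
            have : n + 1 = j := by simpa using h
            rw [Nat.choose_eq_zero_of_lt (by omega : n < j)]
            simp
        · have hu := ih p (k - 1) (s + 1) j (by
            have : k * (p + 1) = k * p + k := by ring
            omega)
          have e : s + 1 + (k - 1) = s + k := by omega
          rw [e] at hu
          push_cast
          rw [hu]
          rcases s with _ | s
          · simp [F_succ_zero]
          · have := hd (by omega)
            simp only [Nat.add_sub_cancel, add_zero] at this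
            simp [this]
            rw [F_succ_succ]; ring
      · have hn : nxt k t = t - 1 := by simp [nxt]; omega
        rw [hn]
        have hu := ih p (t - 1) (s + 1) j (by omega)
        have e : s + 1 + (t - 1) = s + t := by omega
        rw [e] at hu
        have : ¬ (t = 0 ∧ 1 ≤ s) := by omega
        simp [this, hu]
    rw [← add_assoc, Nat.cast_add, hud, hh]
    rcases j with _ | j
    · simp
    · simp [Nat.choose_succ_succ]; ring

theorem stmt12 (k l r : ℕ) (hk : 1 ≤ k) (hl : l ≤ k - 1) :
    (tildeP k l r : ℚ) =
      ∑ p ∈ Finset.range (r / 2 + 1),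
        ((l : ℚ) + 1) / (k * p + l + 1) * Nat.choose ((k + 1) * p + l) p *
          Nat.choose (r + 2 * (k - 1) * p + 2 * l) (r - 2 * p) := by
  have hlk : l < k := by omega
  have hset : {w : List Step | IsNonneg w ∧ w.count Step.u = w.count Step.d ∧
    2 * w.count Step.u + k * w.count Step.h = k * r + 2 * l ∧
    (uhRuns k w = [] → l = 0) ∧
    (∀ a ∈ (uhRuns k w).head?, a % k = l % k) ∧
    (∀ a ∈ (uhRuns k w).tail, a % k = 0)} =
    (((Finset.range (r / 2 + 1)).biUnion
      (fun p => T k (2 * (k * p + l) + 0 + (r - 2 * p)) l 0 (r - 2 * p)) : Finset (List Step)) :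
        Set (List Step)) := by
    ext w
    simp only [Set.mem_setOf_eq, Finset.coe_biUnion, Set.mem_iUnion, Finset.mem_coe, mem_T,
      Finset.mem_range, Nat.mod_eq_of_lt hlk, exists_prop]
    constructor
    · rintro ⟨h1, h2, h3, h4, h5, h6⟩
      have hg : good k l 0 w := by
        rw [good_iff, rc_iff k w l hlk]
        refine ⟨⟨?_, h5, h6⟩, h1, by omega⟩
        intro hw
        rcases w with _ | ⟨x, w⟩
        · exact h4 (uhRuns_nil k)
        · simp at hw
          subst hw
          have := h1 1
          simp at this
      obtain ⟨p, hp⟩ := good_count k hk w l 0 hg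
      have e : k * (2 * p + w.count Step.h) = k * r := by
        rw [hp] at h3
        have : k * (2 * p + w.count Step.h) = 2 * (k * p) + k * w.count Step.h := by ring
        omega
      have e := Nat.eq_of_mul_eq_mul_left (by omega) e
      have := length_count w
      exact ⟨p, by omega, by omega, hg, by omega⟩
    · rintro ⟨p, hp, h1, hg, h2⟩
      have hg' := hg
      rw [good_iff, rc_iff k w l hlk] at hg'
      obtain ⟨⟨ha, hb, hc⟩, hn, hd⟩ := hg'
      have := length_count w
      have hu : w.count Step.u = k * p + l := by omega
      refine ⟨hn, by omega, ?_, ?_, hb, hc⟩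
      · rw [hu, h2]
        obtain ⟨q, hq⟩ : ∃ q, r = 2 * p + q := ⟨r - 2 * p, by omega⟩
        subst hq
        simp
        ring
      · intro hr
        apply ha
        rcases w with _ | ⟨x, w⟩
        · rfl
        · by_contra hx
          obtain ⟨a, l', h⟩ := uhRuns_ne k w x (by simpa using hx)
          rw [hr] at h
          simp at h
  rw [tildeP, hset, Set.ncard_coe_finset, Finset.card_biUnion]
  · push_cast
    refine Finset.sum_congr rfl fun p hp => ?_
    rw [Finset.mem_range] at hp
    rw [card_T k hk _ p l 0 _ rfl, F, zero_add]
    have e : 2 * (k * p + l) + 0 + (r - 2 * p) = r + 2 * (k - 1) * p + 2 * l := by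
      obtain ⟨k, rfl⟩ : ∃ k', k = k' + 1 := ⟨k - 1, by omega⟩
      obtain ⟨q, rfl⟩ : ∃ q, r = 2 * p + q := ⟨r - 2 * p, by omega⟩
      simp
      ring
    rw [e]
    ring
  · intro p hp q hq hpq
    refine Finset.disjoint_left.2 ?_
    intro w hw hw'
    rw [mem_T] at hw hw'
    simp only [Finset.coe_range, Set.mem_Iio, Finset.mem_range] at hp hq
    omega
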